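/- arXiv:1008.4550 — 2 statements merged into one kernel-verified Lean document; each statement's English description precedes it below -/
import Mathlib

section
/- Let 0 < s < 1, p = (2−s)/(1−s) (equivalently s = (p−2)/(p−1)). There is a constant c(p) such that for all f with Fourier support in {2j ≠ ±k} one has ‖f‖_{L^p(Q)} ≤ c(p) ‖f‖_{E^s}, where ‖f‖²_{E^s} = Σ_{2j ≠ ±k} |k² − 4j²|^s |f̂(j,k)|². -/
open Real Complex MeasureTheory

open scoped ComplexConjugate ENNReal

/-! The proof is Chemin's frequency truncation. To bound the level set `{t < ‖f‖}`, drop from the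
series of `f` the frequencies of weight at most a constant times `t`: by Cauchy–Schwarz the dropped
part has sup norm at most `t / 2`, so Chebyshev and Parseval bound the measure of the level set by
`t⁻²` times the `ℓ²` mass of the remaining coefficients. Integrating against `p t ^ (p - 1)`
restores the energy `∑ ρ ^ (p - 2) ‖f̂‖²`. Only a uniformly bounded orthogonal system with weights
satisfying `∑ ρ ^ (-p) < ∞` is needed. For `ρ ^ (p - 2) = |k² - 4j²| ^ s`, the factorization
`|k² - 4j²| = |k - 2j| |k + 2j|` reduces this condition to the convergence of `(∑ |m| ^ (-σ))²` with
`σ = p s / (p - 2) > 1`. -/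

theorem lintegral_Ioo_rpow {r R : ℝ} (hr : -1 < r) (hR : 0 ≤ R) :
    ∫⁻ t in Set.Ioo 0 R, ENNReal.ofReal (t ^ r) = ENNReal.ofReal (R ^ (r + 1) / (r + 1)) := by
  have hii := intervalIntegral.intervalIntegrable_rpow' (a := 0) (b := R) hr
  rw [restrict_Ioo_eq_restrict_Ioc, ← ofReal_integral_eq_lintegral_ofReal,
    ← intervalIntegral.integral_of_le hR, integral_rpow (.inl hr),
    Real.zero_rpow (by linarith), sub_zero]
  · exact (intervalIntegrable_iff_integrableOn_Ioc_of_le hR).1 hii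
  · filter_upwards [ae_restrict_mem measurableSet_Ioc] with t ht
    exact Real.rpow_nonneg ht.1.le _

theorem lintegral_rpow_le_of_meas_lt_le {X ι : Type*} [MeasurableSpace X] [Countable ι]
    {μ : Measure X} {F : X → ℝ} (hF : 0 ≤ᵐ[μ] F) (hFm : AEMeasurable F μ) {p q : ℝ} (hp : 0 < p)
    (hqp : q < p) {c : ι → ℝ≥0∞} {R : ι → ℝ} (hR : ∀ a, 0 ≤ R a)
    (h : ∀ t, 0 < t →
      μ {x | t < F x} ≤ ENNReal.ofReal (t ^ (-q)) * ∑' a, {a | t < R a}.indicator c a) :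
    ∫⁻ x, ENNReal.ofReal (F x ^ p) ∂μ ≤
      ENNReal.ofReal (p / (p - q)) * ∑' a, c a * ENNReal.ofReal (R a ^ (p - q)) := by
  let φ : ℝ → ℝ≥0∞ := fun t => ENNReal.ofReal (t ^ (p - 1 - q))
  have hφ : Measurable φ := by fun_prop
  have hlevel : ∀ t ∈ Set.Ioi (0 : ℝ), μ {x | t < F x} * ENNReal.ofReal (t ^ (p - 1)) ≤
      ∑' a, c a * (Set.Iio (R a)).indicator φ t := by
    intro t (ht : 0 < t)
    have hpow : ENNReal.ofReal (t ^ (-q)) * ENNReal.ofReal (t ^ (p - 1)) = φ t := by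
      rw [← ENNReal.ofReal_mul (by positivity), ← Real.rpow_add ht, neg_add_eq_sub]
    calc _ ≤ ENNReal.ofReal (t ^ (-q)) * (∑' a, {a | t < R a}.indicator c a) *
          ENNReal.ofReal (t ^ (p - 1)) := by gcongr; exact h t ht
      _ = ∑' a, {a | t < R a}.indicator c a * φ t := by
        rw [mul_right_comm, hpow, mul_comm, ENNReal.tsum_mul_right]
      _ = _ := by simp [Set.indicator_apply]
  calc ∫⁻ x, ENNReal.ofReal (F x ^ p) ∂μ
      = ENNReal.ofReal p *
          ∫⁻ t in Set.Ioi 0, μ {x | t < F x} * ENNReal.ofReal (t ^ (p - 1)) :=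
        lintegral_rpow_eq_lintegral_meas_lt_mul μ hF hFm hp
    _ ≤ ENNReal.ofReal p * ∫⁻ t in Set.Ioi 0, ∑' a, c a * (Set.Iio (R a)).indicator φ t :=
        mul_le_mul_right (setLIntegral_mono' measurableSet_Ioi hlevel) _
    _ = ENNReal.ofReal p * ∑' a, c a * ENNReal.ofReal (R a ^ (p - q) / (p - q)) := by
        rw [lintegral_tsum fun a => ((hφ.indicator measurableSet_Iio).const_mul _).aemeasurable]
        congr! 3 with a
        rw [lintegral_const_mul _ (hφ.indicator measurableSet_Iio),
          setLIntegral_indicator measurableSet_Iio, Set.Iio_inter_Ioi,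
          lintegral_Ioo_rpow (by linarith) (hR a), sub_right_comm, sub_add_cancel]
    _ = ENNReal.ofReal (p / (p - q)) * ∑' a, c a * ENNReal.ofReal (R a ^ (p - q)) := by
        simp only [div_eq_mul_inv _ (p - q), ENNReal.ofReal_mul hp.le,
          ENNReal.ofReal_mul (Real.rpow_nonneg (hR _) _), ← mul_assoc, ENNReal.tsum_mul_right]
        ring

theorem tsum_le_sqrt_tsum_mul_sqrt_tsum_of_sq_le_mul {ι : Type*} {f u v : ι → ℝ}
    (hf : ∀ a, 0 ≤ f a) (hu : ∀ a, 0 ≤ u a) (hv : ∀ a, 0 ≤ v a) (hus : Summable u)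
    (hvs : Summable v) (h : ∀ a, f a ^ 2 ≤ u a * v a) :
    ∑' a, f a ≤ √(∑' a, u a) * √(∑' a, v a) := by
  refine Real.tsum_le_of_sum_le hf fun T => ?_
  rw [← Real.sqrt_mul (tsum_nonneg hu)]
  refine Real.le_sqrt_of_sq_le ?_
  calc (∑ a ∈ T, f a) ^ 2 ≤ (∑ a ∈ T, u a) * ∑ a ∈ T, v a :=
        T.sum_sq_le_sum_mul_sum_of_sq_le_mul (fun a _ => hu a) (fun a _ => hv a) fun a _ => h a
    _ ≤ (∑' a, u a) * ∑' a, v a :=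
        mul_le_mul (hus.sum_le_tsum T fun a _ => hu a) (hvs.sum_le_tsum T fun a _ => hv a)
          (Finset.sum_nonneg fun a _ => hv a) (tsum_nonneg hu)

theorem tsum_norm_indicator_le_of_summable_rpow {ι E : Type*} [NormedAddCommGroup E]
    {ρ : ι → ℝ} {g : ι → E} {p B : ℝ} (hρ : ∀ a, 0 ≤ ρ a) (hg : ∀ a, ρ a = 0 → g a = 0)
    (hρp : Summable fun a => ρ a ^ (-p)) (hE : Summable fun a => ρ a ^ (p - 2) * ‖g a‖ ^ 2)
    (hB : 0 ≤ B) :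
    ∑' a, ‖{a | ρ a ≤ B}.indicator g a‖ ≤
      B * √(∑' a, ρ a ^ (-p)) * √(∑' a, ρ a ^ (p - 2) * ‖g a‖ ^ 2) := by
  have hρp0 : ∀ a, 0 ≤ B ^ 2 * ρ a ^ (-p) := fun a =>
    mul_nonneg (sq_nonneg B) (Real.rpow_nonneg (hρ a) _)
  have hE0 : ∀ a, 0 ≤ ρ a ^ (p - 2) * ‖g a‖ ^ 2 := fun a =>
    mul_nonneg (Real.rpow_nonneg (hρ a) _) (sq_nonneg _)
  have hterm : ∀ a, ‖{a | ρ a ≤ B}.indicator g a‖ ^ 2 ≤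
      (B ^ 2 * ρ a ^ (-p)) * (ρ a ^ (p - 2) * ‖g a‖ ^ 2) := by
    intro a
    by_cases hne : ρ a ≤ B ∧ ρ a ≠ 0
    · obtain ⟨haB, ha⟩ := hne
      have hpos : 0 < ρ a := (hρ a).lt_of_ne' ha
      have hcancel : ρ a ^ 2 * ρ a ^ (-p) * ρ a ^ (p - 2) = 1 := by
        rw [← Real.rpow_two, ← Real.rpow_add hpos, ← Real.rpow_add hpos,
          show 2 + -p + (p - 2) = 0 by ring, Real.rpow_zero]
      calc ‖{a | ρ a ≤ B}.indicator g a‖ ^ 2 ≤ ‖g a‖ ^ 2 :=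
            pow_le_pow_left₀ (norm_nonneg _) (norm_indicator_le_norm_self g a) 2
        _ = ρ a ^ 2 * ρ a ^ (-p) * (ρ a ^ (p - 2) * ‖g a‖ ^ 2) := by
            rw [← mul_assoc, hcancel, one_mul]
        _ ≤ _ := by gcongr
    · have hzero : {a | ρ a ≤ B}.indicator g a = 0 :=
        Set.indicator_apply_eq_zero.2 fun haB => hg a (not_not.1 fun ha => hne ⟨haB, ha⟩)
      rw [hzero, norm_zero, zero_pow two_ne_zero]
      exact mul_nonneg (hρp0 a) (hE0 a)
  refine (tsum_le_sqrt_tsum_mul_sqrt_tsum_of_sq_le_mul (fun a => norm_nonneg _) hρp0 hE0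
    (hρp.mul_left _) hE hterm).trans_eq ?_
  rw [tsum_mul_left, Real.sqrt_mul (sq_nonneg B), Real.sqrt_sq hB]

theorem summable_norm_sq_of_summable_norm {ι E : Type*} [SeminormedAddCommGroup E] {g : ι → E}
    (hg : Summable fun a => ‖g a‖) : Summable fun a => ‖g a‖ ^ 2 := by
  have hprod := hg.mul_of_nonneg hg (fun _ => norm_nonneg _) fun _ => norm_nonneg _
  simpa only [sq, Function.comp_def, Function.diag] using
    hprod.comp_injective Function.diag_injective

theorem summable_norm_indicator {ι E : Type*} [SeminormedAddCommGroup E] {g : ι → E}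
    (hg : Summable fun a => ‖g a‖) (s : Set ι) : Summable fun a => ‖s.indicator g a‖ := by
  simpa only [norm_indicator_eq_indicator_norm] using hg.indicator s

/-- A family of functions bounded by `1` and pairwise orthogonal in `L²(μ)`, the setting of the
truncation argument. The functions need not have norm one in `L²(μ)`, so that characters qualify
without normalizing the measure. -/
structure IsBoundedOrthogonalSystem {ι X 𝕜 : Type*} [MeasurableSpace X] [RCLike 𝕜]
    (e : ι → X → 𝕜) (μ : Measure X) : Prop where
  aestronglyMeasurable : ∀ a, AEStronglyMeasurable (e a) μ
  norm_le_one : ∀ a x, ‖e a x‖ ≤ 1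
  integral_mul_conj_eq_zero : Pairwise fun a b => ∫ x, e a x * conj (e b x) ∂μ = 0

namespace IsBoundedOrthogonalSystem

variable {ι X 𝕜 : Type*} [MeasurableSpace X] [RCLike 𝕜] {e : ι → X → 𝕜} {μ : Measure X}
  {g : ι → 𝕜}

theorem norm_mul_le (he : IsBoundedOrthogonalSystem e μ) (g : ι → 𝕜) (a : ι) (x : X) :
    ‖g a * e a x‖ ≤ ‖g a‖ := by
  rw [norm_mul]
  exact mul_le_of_le_one_right (norm_nonneg _) (he.norm_le_one a x)

theorem summable_norm_mul (he : IsBoundedOrthogonalSystem e μ) (hg : Summable fun a => ‖g a‖)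
    (x : X) : Summable fun a => ‖g a * e a x‖ :=
  hg.of_nonneg_of_le (fun _ => norm_nonneg _) fun a => he.norm_mul_le g a x

theorem norm_tsum_mul_le (he : IsBoundedOrthogonalSystem e μ) (hg : Summable fun a => ‖g a‖)
    (x : X) : ‖∑' a, g a * e a x‖ ≤ ∑' a, ‖g a‖ :=
  tsum_of_norm_bounded hg.hasSum fun a => he.norm_mul_le g a x

theorem half_le_norm_tsum_indicator_compl_mul (he : IsBoundedOrthogonalSystem e μ)
    (hg : Summable fun a => ‖g a‖) {s : Set ι} {t : ℝ} (hs : ∑' a, ‖s.indicator g a‖ ≤ t / 2)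
    {x : X} (hx : t ≤ ‖∑' a, g a * e a x‖) : t / 2 ≤ ‖∑' a, sᶜ.indicator g a * e a x‖ := by
  have hlow := summable_norm_indicator hg s
  have hsplit : ∑' a, g a * e a x =
      (∑' a, s.indicator g a * e a x) + ∑' a, sᶜ.indicator g a * e a x := by
    rw [← (he.summable_norm_mul hlow x).of_norm.tsum_add
      (he.summable_norm_mul (summable_norm_indicator hg sᶜ) x).of_norm]
    exact tsum_congr fun a => by rw [← add_mul, ← Pi.add_apply, Set.indicator_self_add_compl]
  rw [hsplit] at hx
  linarith [norm_add_le (∑' a, s.indicator g a * e a x) (∑' a, sᶜ.indicator g a * e a x),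
    he.norm_tsum_mul_le hlow x]

theorem aestronglyMeasurable_tsum_mul [Countable ι] (he : IsBoundedOrthogonalSystem e μ)
    (g : ι → 𝕜) : AEStronglyMeasurable (fun x => ∑' a, g a * e a x) μ :=
  .tsum fun a => (he.aestronglyMeasurable a).const_mul (g a)

theorem norm_mul_conj_le_one (he : IsBoundedOrthogonalSystem e μ) (a b : ι) (x : X) :
    ‖e a x * conj (e b x)‖ ≤ 1 := by
  rw [norm_mul, RCLike.norm_conj]
  exact mul_le_one₀ (he.norm_le_one a x) (norm_nonneg _) (he.norm_le_one b x)

variable [IsFiniteMeasure μ]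

theorem integral_norm_sq_le (he : IsBoundedOrthogonalSystem e μ) (a : ι) :
    ∫ x, ‖e a x‖ ^ 2 ∂μ ≤ μ.real Set.univ := by
  have hle : ∀ x, ‖e a x‖ ^ 2 ≤ 1 := fun x => pow_le_one₀ (norm_nonneg _) (he.norm_le_one a x)
  calc ∫ x, ‖e a x‖ ^ 2 ∂μ ≤ ∫ _, (1 : ℝ) ∂μ := by
        refine integral_mono_of_nonneg (.of_forall fun x => sq_nonneg _) (integrable_const _)
          (.of_forall hle)
    _ = μ.real Set.univ := by simp

theorem integrable_mul_conj (he : IsBoundedOrthogonalSystem e μ) (a b : ι) :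
    Integrable (fun x => e a x * conj (e b x)) μ :=
  .of_bound ((he.aestronglyMeasurable a).mul
    (RCLike.continuous_conj.comp_aestronglyMeasurable (he.aestronglyMeasurable b))) 1
    (.of_forall (he.norm_mul_conj_le_one a b))

variable [Countable ι]

theorem ofReal_integral_norm_sq_tsum_mul (he : IsBoundedOrthogonalSystem e μ)
    (hg : Summable fun a => ‖g a‖) :
    ((∫ x, ‖∑' a, g a * e a x‖ ^ 2 ∂μ : ℝ) : 𝕜) =
      ∑' ab : ι × ι, g ab.1 * conj (g ab.2) * ∫ x, e ab.1 x * conj (e ab.2 x) ∂μ := by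
  let F : ι × ι → X → 𝕜 := fun ab x => g ab.1 * conj (g ab.2) * (e ab.1 x * conj (e ab.2 x))
  have hFint : ∀ ab, Integrable (F ab) μ := fun ab =>
    (he.integrable_mul_conj ab.1 ab.2).const_mul _
  have hFle : ∀ ab, ∫ x, ‖F ab x‖ ∂μ ≤ ‖g ab.1‖ * ‖g ab.2‖ * μ.real Set.univ := fun ab => by
    calc ∫ x, ‖F ab x‖ ∂μ ≤ ∫ _, ‖g ab.1‖ * ‖g ab.2‖ ∂μ := by
          refine integral_mono (hFint ab).norm (integrable_const _) fun x => ?_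
          simp only [F, norm_mul _ (e _ _ * _), norm_mul (g _), RCLike.norm_conj]
          exact mul_le_of_le_one_right (by positivity) (he.norm_mul_conj_le_one _ _ x)
      _ = _ := by rw [integral_const, smul_eq_mul, mul_comm]
  have hFsum : Summable fun ab => ∫ x, ‖F ab x‖ ∂μ :=
    ((hg.mul_of_nonneg hg (fun _ => norm_nonneg _) fun _ => norm_nonneg _).mul_right
      (μ.real Set.univ)).of_nonneg_of_le (fun ab => integral_nonneg fun x => norm_nonneg _) hFle
  have hFtsum : ∀ x, ∑' ab, F ab x = ((‖∑' a, g a * e a x‖ ^ 2 : ℝ) : 𝕜) := fun x => by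
    rw [RCLike.ofReal_pow, ← RCLike.mul_conj, RCLike.conj_tsum,
      tsum_mul_tsum_of_summable_norm (he.summable_norm_mul hg x)
        (by simpa only [RCLike.norm_conj] using he.summable_norm_mul hg x)]
    simp only [F, map_mul, mul_mul_mul_comm]
  simp only [← integral_ofReal, ← hFtsum, ← integral_const_mul]
  exact (integral_tsum_of_summable_integral_norm hFint hFsum).symm

theorem integral_norm_sq_tsum_mul (he : IsBoundedOrthogonalSystem e μ)
    (hg : Summable fun a => ‖g a‖) :
    ∫ x, ‖∑' a, g a * e a x‖ ^ 2 ∂μ = ∑' a, ‖g a‖ ^ 2 * ∫ x, ‖e a x‖ ^ 2 ∂μ := by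
  have hoffdiag : (Function.support fun ab : ι × ι =>
      g ab.1 * conj (g ab.2) * ∫ x, e ab.1 x * conj (e ab.2 x) ∂μ) ⊆ Set.range Function.diag := by
    rintro ⟨a, b⟩ hab
    have heq : a = b := of_not_not fun hne => hab <| by
      simp only [he.integral_mul_conj_eq_zero hne, mul_zero]
    exact ⟨a, Prod.ext rfl heq⟩
  rw [← RCLike.ofReal_inj (K := 𝕜), he.ofReal_integral_norm_sq_tsum_mul hg,
    ← Function.diag_injective.tsum_eq hoffdiag, RCLike.ofReal_tsum]
  simp only [Function.diag, RCLike.mul_conj, ← RCLike.ofReal_pow, integral_ofReal,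
    RCLike.ofReal_mul]

theorem integral_norm_sq_tsum_mul_le (he : IsBoundedOrthogonalSystem e μ)
    (hg : Summable fun a => ‖g a‖) :
    ∫ x, ‖∑' a, g a * e a x‖ ^ 2 ∂μ ≤ μ.real Set.univ * ∑' a, ‖g a‖ ^ 2 := by
  have hle : ∀ a, ‖g a‖ ^ 2 * ∫ x, ‖e a x‖ ^ 2 ∂μ ≤ μ.real Set.univ * ‖g a‖ ^ 2 := fun a => by
    rw [mul_comm]
    exact mul_le_mul_of_nonneg_right (he.integral_norm_sq_le a) (sq_nonneg _)
  have hsq := (summable_norm_sq_of_summable_norm hg).mul_left (μ.real Set.univ)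
  rw [he.integral_norm_sq_tsum_mul hg, ← tsum_mul_left]
  exact (hsq.of_nonneg_of_le (fun a => by positivity) hle).tsum_le_tsum hle hsq

theorem meas_lt_norm_tsum_mul_le (he : IsBoundedOrthogonalSystem e μ)
    (hg : Summable fun a => ‖g a‖) {s : Set ι} {t : ℝ} (ht : 0 < t)
    (hs : ∑' a, ‖s.indicator g a‖ ≤ t / 2) :
    μ {x | t < ‖∑' a, g a * e a x‖} ≤ ENNReal.ofReal (t ^ (-2 : ℝ)) *
      ∑' a, sᶜ.indicator (fun a => ENNReal.ofReal (4 * μ.real Set.univ * ‖g a‖ ^ 2)) a := by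
  have hhigh := summable_norm_indicator hg sᶜ
  let H : X → 𝕜 := fun x => ∑' a, sᶜ.indicator g a * e a x
  have hsub : {x | t < ‖∑' a, g a * e a x‖} ⊆ {x | t ^ 2 / 4 ≤ ‖H x‖ ^ 2} :=
    fun x (hx : t < _) => calc
      t ^ 2 / 4 = (t / 2) ^ 2 := by ring
      _ ≤ ‖H x‖ ^ 2 := by
        gcongr
        exact he.half_le_norm_tsum_indicator_compl_mul hg hs hx.le
  have hHint : Integrable (fun x => ‖H x‖ ^ 2) μ := by
    refine .of_bound ((he.aestronglyMeasurable_tsum_mul _).norm.pow 2)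
      ((∑' a, ‖sᶜ.indicator g a‖) ^ 2) (.of_forall fun x => ?_)
    rw [norm_pow, norm_norm]
    exact pow_le_pow_left₀ (norm_nonneg _) (he.norm_tsum_mul_le hhigh x) 2
  have hchebyshev : t ^ 2 / 4 * μ.real {x | t ^ 2 / 4 ≤ ‖H x‖ ^ 2} ≤
      μ.real Set.univ * ∑' a, ‖sᶜ.indicator g a‖ ^ 2 :=
    (mul_meas_ge_le_integral_of_nonneg (.of_forall fun x => sq_nonneg _) hHint _).trans
      (he.integral_norm_sq_tsum_mul_le hhigh)
  calc μ {x | t < ‖∑' a, g a * e a x‖}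
      ≤ ENNReal.ofReal (μ.real {x | t ^ 2 / 4 ≤ ‖H x‖ ^ 2}) := by
        rw [ofReal_measureReal]
        exact measure_mono hsub
    _ ≤ ENNReal.ofReal (t ^ (-2 : ℝ) * ∑' a, 4 * μ.real Set.univ * ‖sᶜ.indicator g a‖ ^ 2) := by
        gcongr
        rw [tsum_mul_left, Real.rpow_neg ht.le, Real.rpow_two, ← div_eq_inv_mul,
          le_div_iff₀ (by positivity)]
        linarith
    _ = _ := by
        rw [ENNReal.ofReal_mul (by positivity), ENNReal.ofReal_tsum_of_nonneg
          (fun a => by positivity) ((summable_norm_sq_of_summable_norm hhigh).mul_left _)]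
        congr! 3 with a
        by_cases ha : a ∈ sᶜ <;> simp [ha]

theorem lintegral_norm_rpow_tsum_mul_le (he : IsBoundedOrthogonalSystem e μ)
    (hg : Summable fun a => ‖g a‖) {p M : ℝ} (hp : 2 < p) (hM : 0 < M) {ρ : ι → ℝ}
    (hρ : ∀ a, 0 ≤ ρ a) (hρg : ∀ a, ρ a = 0 → g a = 0) (hρp : Summable fun a => ρ a ^ (-p))
    (hE : Summable fun a => ρ a ^ (p - 2) * ‖g a‖ ^ 2)
    (hle : 2 * (√(∑' a, ρ a ^ (-p)) * √(∑' a, ρ a ^ (p - 2) * ‖g a‖ ^ 2)) ≤ M) :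
    ∫⁻ x, ENNReal.ofReal (‖∑' a, g a * e a x‖ ^ p) ∂μ ≤ ENNReal.ofReal
      (4 * μ.real Set.univ * (p / (p - 2)) * M ^ (p - 2) * ∑' a, ρ a ^ (p - 2) * ‖g a‖ ^ 2) := by
  have : 0 < p - 2 := sub_pos.2 hp
  have hE0 : ∀ a, 0 ≤ ρ a ^ (p - 2) * ‖g a‖ ^ 2 := fun a =>
    mul_nonneg (Real.rpow_nonneg (hρ a) _) (sq_nonneg _)
  have hlevel : ∀ t, 0 < t → μ {x | t < ‖∑' a, g a * e a x‖} ≤ ENNReal.ofReal (t ^ (-2 : ℝ)) *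
      ∑' a, {a | t < M * ρ a}.indicator
        (fun a => ENNReal.ofReal (4 * μ.real Set.univ * ‖g a‖ ^ 2)) a := by
    intro t ht
    have hlow : ∑' a, ‖{a | ρ a ≤ t / M}.indicator g a‖ ≤ t / 2 := by
      refine (tsum_norm_indicator_le_of_summable_rpow hρ hρg hρp hE (by positivity)).trans ?_
      calc t / M * √(∑' a, ρ a ^ (-p)) * √(∑' a, ρ a ^ (p - 2) * ‖g a‖ ^ 2)
          ≤ t / M * (M / 2) := by
            rw [mul_assoc]
            gcongr
            linarith
        _ = t / 2 := by field_simp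
    have hcompl : {a | ρ a ≤ t / M}ᶜ = {a | t < M * ρ a} := by
      ext a
      simp only [Set.mem_compl_iff, Set.mem_ofPred_eq, not_le, div_lt_iff₀' hM]
    simpa only [hcompl] using he.meas_lt_norm_tsum_mul_le hg ht hlow
  have hterm : ∀ a, ENNReal.ofReal (4 * μ.real Set.univ * ‖g a‖ ^ 2) *
      ENNReal.ofReal ((M * ρ a) ^ (p - 2)) = ENNReal.ofReal
        (4 * μ.real Set.univ * M ^ (p - 2) * (ρ a ^ (p - 2) * ‖g a‖ ^ 2)) := fun a => by
    rw [← ENNReal.ofReal_mul (by positivity), Real.mul_rpow hM.le (hρ a)]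
    ring_nf
  refine (lintegral_rpow_le_of_meas_lt_le (.of_forall fun x => norm_nonneg _)
    (he.aestronglyMeasurable_tsum_mul g).norm.aemeasurable (by linarith) hp
    (fun a => mul_nonneg hM.le (hρ a)) hlevel).trans_eq ?_
  simp only [hterm]
  rw [← ENNReal.ofReal_tsum_of_nonneg (fun a => mul_nonneg (by positivity) (hE0 a))
    (hE.mul_left _), tsum_mul_left, ← ENNReal.ofReal_mul (by positivity)]
  ring_nf

theorem integral_norm_rpow_tsum_mul_le (he : IsBoundedOrthogonalSystem e μ)
    (hg : Summable fun a => ‖g a‖) {p : ℝ} (hp : 2 < p) {ρ : ι → ℝ}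
    (hρ : ∀ a, 0 ≤ ρ a) (hρg : ∀ a, ρ a = 0 → g a = 0) (hρp : Summable fun a => ρ a ^ (-p))
    (hE : Summable fun a => ρ a ^ (p - 2) * ‖g a‖ ^ 2) :
    ∫ x, ‖∑' a, g a * e a x‖ ^ p ∂μ ≤
      4 * μ.real Set.univ * (p / (p - 2)) * (2 * √(∑' a, ρ a ^ (-p))) ^ (p - 2) *
        √(∑' a, ρ a ^ (p - 2) * ‖g a‖ ^ 2) ^ p := by
  have : 0 < p - 2 := sub_pos.2 hp
  have hρp0 : ∀ a, 0 ≤ ρ a ^ (-p) := fun a => Real.rpow_nonneg (hρ a) _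
  have hE0 : ∀ a, 0 ≤ ρ a ^ (p - 2) * ‖g a‖ ^ 2 := fun a =>
    mul_nonneg (Real.rpow_nonneg (hρ a) _) (sq_nonneg _)
  by_cases hg0 : ∀ a, g a = 0
  · simp only [hg0, zero_mul, tsum_zero, norm_zero, Real.zero_rpow (by linarith : p ≠ 0),
      integral_zero]
    positivity
  obtain ⟨b, hb⟩ := not_forall.1 hg0
  have hρb : 0 < ρ b := (hρ b).lt_of_ne' (mt (hρg b) hb)
  set Z := ∑' a, ρ a ^ (-p)
  set E := ∑' a, ρ a ^ (p - 2) * ‖g a‖ ^ 2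
  have hE_nonneg : 0 ≤ E := tsum_nonneg hE0
  have hZ : 0 < √Z := Real.sqrt_pos.2 (hρp.tsum_pos hρp0 b (by positivity))
  have hE_pos : 0 < √E := Real.sqrt_pos.2 (hE.tsum_pos hE0 b (by positivity))
  have hpow : (2 * (√Z * √E)) ^ (p - 2) * E = (2 * √Z) ^ (p - 2) * √E ^ p := by
    nth_rewrite 2 [← Real.sq_sqrt hE_nonneg]
    rw [← mul_assoc, Real.mul_rpow (by positivity) hE_pos.le, mul_assoc, ← Real.rpow_two,
      ← Real.rpow_add hE_pos, sub_add_cancel]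
  have hmeas := (he.aestronglyMeasurable_tsum_mul g).norm.aemeasurable.pow_const p
  rw [integral_eq_lintegral_of_nonneg_ae (.of_forall fun x => by positivity)
    hmeas.aestronglyMeasurable]
  refine ENNReal.toReal_le_of_le_ofReal (by positivity) ?_
  rw [mul_assoc _ (_ ^ _), ← hpow, ← mul_assoc]
  exact he.lintegral_norm_rpow_tsum_mul_le hg hp (by positivity) hρ hρg hρp hE le_rfl

end IsBoundedOrthogonalSystem

/-- The absolute value `|k² - 4j²|` of the symbol of the wave operator at the frequency `(j, k)`,
the weight in the norm of `E^s`. -/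
noncomputable def waveWeight (a : ℤ × ℤ) : ℝ := (|a.2 ^ 2 - 4 * a.1 ^ 2| : ℤ)

theorem waveWeight_eq_abs_mul_abs (a : ℤ × ℤ) :
    waveWeight a = |((a.2 - 2 * a.1 : ℤ) : ℝ)| * |((a.2 + 2 * a.1 : ℤ) : ℝ)| := by
  rw [waveWeight, ← abs_mul]
  push_cast
  ring_nf

theorem waveWeight_nonneg (a : ℤ × ℤ) : 0 ≤ waveWeight a :=
  Int.cast_nonneg (abs_nonneg _)

theorem waveWeight_eq_zero_iff {j k : ℤ} : waveWeight (j, k) = 0 ↔ 2 * j = k ∨ 2 * j = -k := by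
  rw [waveWeight_eq_abs_mul_abs, mul_eq_zero, abs_eq_zero, abs_eq_zero, Int.cast_eq_zero,
    Int.cast_eq_zero]
  omega

-- The terms with `waveWeight a = 0` vanish because `0 ^ (-σ) = 0` for the real power.
theorem summable_waveWeight_rpow {σ : ℝ} (hσ : 1 < σ) :
    Summable fun a => waveWeight a ^ (-σ) := by
  have hinj : Function.Injective fun a : ℤ × ℤ => (a.2 - 2 * a.1, a.2 + 2 * a.1) := by
    rintro ⟨j, k⟩ ⟨j', k'⟩ h
    simp only [Prod.mk.injEq] at h ⊢
    omega
  have hsum := Real.summable_abs_int_rpow hσ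
  have hnonneg : ∀ m : ℤ, 0 ≤ |(m : ℝ)| ^ (-σ) := fun m => Real.rpow_nonneg (abs_nonneg _) _
  refine ((hsum.mul_of_nonneg hsum hnonneg hnonneg).comp_injective hinj).congr fun a => ?_
  rw [waveWeight_eq_abs_mul_abs, Real.mul_rpow (abs_nonneg _) (abs_nonneg _), Function.comp_apply]

theorem integral_exp_I_mul_eq_zero {c : ℂ} (hc : c ≠ 0) {L : ℝ} {n : ℤ}
    (hL : c * L = n * (2 * π)) : ∫ x in (0 : ℝ)..L, Complex.exp (I * (c * x)) = 0 := by
  have hend : I * c * L = n * (2 * π * I) := by rw [mul_assoc, hL]; ring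
  simp only [← mul_assoc I]
  rw [integral_exp_mul_complex (mul_ne_zero I_ne_zero hc), hend, exp_int_mul_two_pi_mul_I]
  simp

/-- The rectangle `Q = [0, π] × [0, 2π]`. -/
def waveRect : Set (ℝ × ℝ) := Set.Icc 0 π ×ˢ Set.Icc 0 (2 * π)

instance : IsFiniteMeasure (volume.restrict waveRect) :=
  isFiniteMeasure_restrict.2 (isCompact_Icc.prod isCompact_Icc).measure_ne_top

/-- The character `e^{i(2jx + kt)}` of frequency `a = (j, k)`, evaluated at `z = (x, t)`. -/
noncomputable def waveMode (a : ℤ × ℤ) (z : ℝ × ℝ) : ℂ :=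
  Complex.exp (I * (2 * a.1 * z.1 + a.2 * z.2))

theorem norm_waveMode (a : ℤ × ℤ) (z : ℝ × ℝ) : ‖waveMode a z‖ = 1 := by
  simpa [waveMode] using norm_exp_I_mul_ofReal (2 * a.1 * z.1 + a.2 * z.2)

theorem continuous_waveMode (a : ℤ × ℤ) : Continuous (waveMode a) := by
  unfold waveMode
  fun_prop

theorem waveMode_mul_conj (a b : ℤ × ℤ) (z : ℝ × ℝ) :
    waveMode a z * conj (waveMode b z) = waveMode (a - b) z := by
  simp only [waveMode, ← exp_conj, ← Complex.exp_add]
  congr 1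
  simp only [map_mul, map_add, conj_I, conj_ofReal, map_intCast, map_ofNat, Prod.fst_sub,
    Prod.snd_sub, Int.cast_sub]
  ring

theorem integral_waveMode_eq_zero {a : ℤ × ℤ} (ha : a ≠ 0) : ∫ z in waveRect, waveMode a z = 0 := by
  have hprod : ∫ z in waveRect, waveMode a z =
      (∫ x in (0 : ℝ)..π, Complex.exp (I * (2 * a.1 * x))) *
        ∫ t in (0 : ℝ)..2 * π, Complex.exp (I * (a.2 * t)) := by
    rw [intervalIntegral.integral_of_le pi_pos.le, intervalIntegral.integral_of_le two_pi_pos.le,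
      ← integral_Icc_eq_integral_Ioc, ← integral_Icc_eq_integral_Ioc, ← setIntegral_prod_mul]
    simp only [waveMode, mul_add, Complex.exp_add, waveRect, Measure.volume_eq_prod]
  rw [hprod, mul_eq_zero]
  obtain hj | hk : a.1 ≠ 0 ∨ a.2 ≠ 0 := by
    contrapose! ha
    exact Prod.ext ha.1 ha.2
  · exact .inl (integral_exp_I_mul_eq_zero (n := a.1)
      (mul_ne_zero two_ne_zero (Int.cast_ne_zero.2 hj)) (by ring))
  · exact .inr (integral_exp_I_mul_eq_zero (n := a.2) (Int.cast_ne_zero.2 hk) (by push_cast; ring))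

theorem isBoundedOrthogonalSystem_waveMode :
    IsBoundedOrthogonalSystem waveMode (volume.restrict waveRect) where
  aestronglyMeasurable a := (continuous_waveMode a).aestronglyMeasurable
  norm_le_one a z := (norm_waveMode a z).le
  integral_mul_conj_eq_zero a b hab := by
    simp only [waveMode_mul_conj]
    exact integral_waveMode_eq_zero (sub_ne_zero.2 hab)

theorem exists_integral_norm_rpow_tsum_waveMode_le {s p : ℝ} (hp2 : 2 < p)
    (hps : p * (1 - s) < 2) :
    ∃ C, 0 ≤ C ∧ ∀ g : ℤ × ℤ → ℂ, (∀ a, waveWeight a = 0 → g a = 0) →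
      (Summable fun a => waveWeight a ^ s * ‖g a‖ ^ 2) →
      ∫ z in waveRect, ‖∑' a, g a * waveMode a z‖ ^ p ≤
        C * √(∑' a, waveWeight a ^ s * ‖g a‖ ^ 2) ^ p := by
  have hp : 0 < p - 2 := sub_pos.2 hp2
  have hs : 0 < s := by nlinarith
  have hσ : 1 < s / (p - 2) * p := by
    rw [div_mul_eq_mul_div, one_lt_div hp]
    linarith
  let ρ : ℤ × ℤ → ℝ := fun a => waveWeight a ^ (s / (p - 2))
  have hρ : ∀ a, 0 ≤ ρ a := fun a => Real.rpow_nonneg (waveWeight_nonneg a) _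
  have hρ_energy : ∀ a, ρ a ^ (p - 2) = waveWeight a ^ s := fun a => by
    rw [← Real.rpow_mul (waveWeight_nonneg a), div_mul_cancel₀ s hp.ne']
  have hρ_sum : Summable fun a => ρ a ^ (-p) := by
    simpa only [ρ, ← Real.rpow_mul (waveWeight_nonneg _), mul_neg] using
      summable_waveWeight_rpow hσ
  refine ⟨4 * (volume.restrict waveRect).real Set.univ * (p / (p - 2)) *
    (2 * √(∑' a, ρ a ^ (-p))) ^ (p - 2), by positivity, fun g hg0 hE => ?_⟩
  by_cases hg : Summable fun a => ‖g a‖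
  · have hρg : ∀ a, ρ a = 0 → g a = 0 := fun a ha =>
      hg0 a ((Real.rpow_eq_zero (waveWeight_nonneg a) (by positivity)).1 ha)
    simp only [← hρ_energy] at hE ⊢
    exact isBoundedOrthogonalSystem_waveMode.integral_norm_rpow_tsum_mul_le hg hp2 hρ hρg hρ_sum hE
  · -- Unless the coefficients are absolutely summable, the series is `0` by convention.
    have hdiv : ∀ z, ∑' a, g a * waveMode a z = 0 := fun z => tsum_eq_zero_of_not_summable fun h =>
      hg (by simpa only [norm_mul, norm_waveMode, mul_one] using h.norm)
    simp only [hdiv, norm_zero, Real.zero_rpow (by linarith : p ≠ 0), integral_zero]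
    positivity

theorem stmt_6_general (s p : ℝ) (hp2 : 2 < p) (hps : p * (1 - s) < 2) :
    ∃ c > 0, ∀ fh : ℤ × ℤ → ℂ,
      (∀ j k : ℤ, (2 * j = k ∨ 2 * j = -k) → fh (j, k) = 0) →
      Summable (fun jk : ℤ × ℤ =>
        ((|jk.2 ^ 2 - 4 * jk.1 ^ 2| : ℤ) : ℝ) ^ s * ‖fh jk‖ ^ 2) →
      ∀ f : ℝ × ℝ → ℂ,
        (∀ x t : ℝ, f (x, t) = ∑' jk : ℤ × ℤ,
          fh jk * Complex.exp (Complex.I * (2 * jk.1 * x + jk.2 * t))) →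
        ∫ z in Set.Icc (0 : ℝ) Real.pi ×ˢ Set.Icc (0 : ℝ) (2 * Real.pi), ‖f z‖ ^ p ≤
          (c * Real.sqrt (∑' jk : ℤ × ℤ,
            ((|jk.2 ^ 2 - 4 * jk.1 ^ 2| : ℤ) : ℝ) ^ s * ‖fh jk‖ ^ 2)) ^ p := by
  obtain ⟨C, hC, hbound⟩ := exists_integral_norm_rpow_tsum_waveMode_le hp2 hps
  refine ⟨(C + 1) ^ p⁻¹, by positivity, fun fh hfh hE f hf => ?_⟩
  have hf_eq : f = fun z => ∑' a, fh a * waveMode a z := funext fun z => hf z.1 z.2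
  rw [Real.mul_rpow (by positivity) (Real.sqrt_nonneg _),
    Real.rpow_inv_rpow (by positivity) (by linarith), hf_eq]
  refine (hbound fh (fun a ha => hfh a.1 a.2 (waveWeight_eq_zero_iff.1 ha)) hE).trans ?_
  exact mul_le_mul_of_nonneg_right (by linarith) (Real.rpow_nonneg (Real.sqrt_nonneg _) p)

/-- Fractional Sobolev embedding E^s ⊂ L^p on Q = [0,π]×[0,2π] with p = (2−s)/(1−s):
‖f‖_{L^p(Q)} ≤ c(p) ‖f‖_{E^s}. -/
theorem stmt_6 (s p : ℝ) (hs0 : 0 < s) (hs1 : s < 1) (hp : p = (2 - s) / (1 - s)) :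
    ∃ c > 0, ∀ fh : ℤ × ℤ → ℂ,
      (∀ j k : ℤ, (2 * j = k ∨ 2 * j = -k) → fh (j, k) = 0) →
      Summable (fun jk : ℤ × ℤ =>
        ((|jk.2 ^ 2 - 4 * jk.1 ^ 2| : ℤ) : ℝ) ^ s * ‖fh jk‖ ^ 2) →
      ∀ f : ℝ × ℝ → ℂ,
        (∀ x t : ℝ, f (x, t) = ∑' jk : ℤ × ℤ,
          fh jk * Complex.exp (Complex.I * (2 * jk.1 * x + jk.2 * t))) →
        ∫ z in Set.Icc (0 : ℝ) Real.pi ×ˢ Set.Icc (0 : ℝ) (2 * Real.pi), ‖f z‖ ^ p ≤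
          (c * Real.sqrt (∑' jk : ℤ × ℤ,
            ((|jk.2 ^ 2 - 4 * jk.1 ^ 2| : ℤ) : ℝ) ^ s * ‖fh jk‖ ^ 2)) ^ p := by
  have h1s : 0 < 1 - s := sub_pos.2 hs1
  refine stmt_6_general s p ?_ ?_ <;> rw [hp]
  · rw [lt_div_iff₀ h1s]
    linarith
  · rw [div_mul_cancel₀ _ h1s.ne']
    linarith
end

section
/- For 0 < s < 1 the inclusion E¹ ↪ E^s is compact, and hence (via E^s ↪ L^p with p = (2−s)/(1−s)) the embedding of E¹ into L^p(Q) is compact for every 2 ≤ p < ∞. -/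
open Real Complex MeasureTheory

/-!
A sequence bounded in `E¹` has a subsequence whose Fourier coefficients converge one by one. On the
frequencies with `|k² - 4j²| ≥ Λ` the `E^s` energy is at most `Λ^(s-1)` times the `E¹` energy, and
only finitely many frequencies remain, so the subsequence is Cauchy in `E^s` for every `s < 1`.

For `E^s ↪ L^p`, cut into dyadic shells `T ≤ |k² - 4j²| ≤ 2T`. Since `k² - 4j² = (k - 2j)(k + 2j)`,
the sum of `|k² - 4j²|^(-r)` converges for `r > 1`, so by Cauchy–Schwarz a function with frequencies
in the shell has sup norm `≲ T^((r-s)/2) ‖u‖_{E^s}`, while orthogonality bounds its `L²` norm by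
`≲ T^(-s/2) ‖u‖_{E^s}`. Interpolation gives the `L^p` bound `≲ T^((r(1-2/p)-s)/2) ‖u‖_{E^s}`, and
for `r (1 - 2/p) < s` the shells sum up as a geometric series.
-/

namespace WaveEmbedding

open Filter Topology Asymptotics

section Energy

variable {ι α E : Type*} [NormedAddCommGroup E] {v w : ι → ℝ} {c d : ι → E}

/-- The squared norm `∑ₐ w(a) |c(a)|²` of the weighted `ℓ²` space with weight `w`; for
`w = |k² - 4j²|^s` it is `‖u‖²_{E^s}` in terms of the Fourier coefficients. Being a `tsum`, it is
`0` when the series diverges. -/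
noncomputable def energy (w : ι → ℝ) (c : ι → E) : ℝ := ∑' a, w a * ‖c a‖ ^ 2

lemma energy_nonneg (hw : ∀ a, 0 ≤ w a) (c : ι → E) : 0 ≤ energy w c :=
  tsum_nonneg fun a => mul_nonneg (hw a) (by positivity)

lemma mul_norm_sub_sq_le {x : ℝ} (hx : 0 ≤ x) (y z : E) :
    x * ‖y - z‖ ^ 2 ≤ 2 * (x * ‖y‖ ^ 2) + 2 * (x * ‖z‖ ^ 2) :=
  calc x * ‖y - z‖ ^ 2 ≤ x * (2 * (‖y‖ ^ 2 + ‖z‖ ^ 2)) := by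
        gcongr
        exact (pow_le_pow_left₀ (norm_nonneg _) (norm_sub_le y z) 2).trans (add_sq_le)
    _ = _ := by ring

lemma summable_energy_sub (hw : ∀ a, 0 ≤ w a) (hc : Summable fun a => w a * ‖c a‖ ^ 2)
    (hd : Summable fun a => w a * ‖d a‖ ^ 2) : Summable fun a => w a * ‖(c - d) a‖ ^ 2 :=
  .of_nonneg_of_le (fun a => mul_nonneg (hw a) (by positivity))
    (fun a => mul_norm_sub_sq_le (hw a) _ _) ((hc.mul_left 2).add (hd.mul_left 2))

lemma energy_sub_le (hw : ∀ a, 0 ≤ w a) (hc : Summable fun a => w a * ‖c a‖ ^ 2)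
    (hd : Summable fun a => w a * ‖d a‖ ^ 2) :
    energy w (c - d) ≤ 2 * energy w c + 2 * energy w d := by
  simp only [energy, ← tsum_mul_left]
  rw [← (hc.mul_left 2).tsum_add (hd.mul_left 2)]
  exact (summable_energy_sub hw hc hd).tsum_le_tsum (fun a => mul_norm_sub_sq_le (hw a) _ _)
    ((hc.mul_left 2).add (hd.mul_left 2))

lemma summable_rpow_mul_norm_sq (hw : ∀ a, 1 ≤ w a) {s : ℝ} (hs : s ≤ 1)
    (hc : Summable fun a => w a * ‖c a‖ ^ 2) : Summable fun a => w a ^ s * ‖c a‖ ^ 2 :=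
  .of_nonneg_of_le
    (fun a => mul_nonneg (rpow_nonneg (zero_le_one.trans (hw a)) s) (by positivity))
    (fun a => mul_le_mul_of_nonneg_right (Real.rpow_le_self_of_one_le (hw a) hs) (by positivity))
    hc

lemma energy_le_sum_add_mul_energy {δ : ℝ} (hδ : 0 ≤ δ) (hv : ∀ a, 0 ≤ v a) (hw : ∀ a, 0 ≤ w a)
    (F : Finset ι) (hF : ∀ a ∉ F, v a ≤ δ * w a) (hc : Summable fun a => w a * ‖c a‖ ^ 2) :
    energy v c ≤ ∑ a ∈ F, v a * ‖c a‖ ^ 2 + δ * energy w c := by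
  classical
  have hvc (a : ι) : 0 ≤ v a * ‖c a‖ ^ 2 := mul_nonneg (hv a) (by positivity)
  have hwc (a : ι) : 0 ≤ w a * ‖c a‖ ^ 2 := mul_nonneg (hw a) (by positivity)
  refine Real.tsum_le_of_sum_le hvc fun G => ?_
  rw [← Finset.sum_inter_add_sum_sdiff G F]
  gcongr ?_ + ?_
  · exact Finset.sum_le_sum_of_subset_of_nonneg Finset.inter_subset_right fun a _ _ => hvc a
  · calc ∑ a ∈ G \ F, v a * ‖c a‖ ^ 2
        ≤ ∑ a ∈ G \ F, δ * (w a * ‖c a‖ ^ 2) := by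
          refine Finset.sum_le_sum fun a ha => ?_
          rw [← mul_assoc]
          gcongr
          exact hF a (Finset.mem_sdiff.1 ha).2
      _ ≤ δ * energy w c := by
          rw [← Finset.mul_sum]
          gcongr
          exact hc.sum_le_tsum _ fun a _ => hwc a

theorem tendsto_energy_zero_of_isLittleO (hv : ∀ a, 0 ≤ v a) (hw : ∀ a, 0 ≤ w a)
    (hvw : v =o[cofinite] w) {l : Filter α} {c : α → ι → E} {R : ℝ}
    (hc : ∀ a, Tendsto (fun x => c x a) l (𝓝 0))
    (hsum : ∀ x, Summable fun a => w a * ‖c x a‖ ^ 2) (hR : ∀ x, energy w (c x) ≤ R) :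
    Tendsto (fun x => energy v (c x)) l (𝓝 0) := by
  refine tendsto_order.2 ⟨fun b hb => .of_forall fun x => hb.trans_le (energy_nonneg hv _),
    fun ε hε => ?_⟩
  obtain ⟨δ, hδ, hδR⟩ := exists_pos_mul_lt (half_pos hε) R
  have hfin : {a | ¬ v a ≤ δ * w a}.Finite := eventually_cofinite.1 <|
    (hvw.bound hδ).mono fun a ha => by
      rwa [Real.norm_of_nonneg (hv a), Real.norm_of_nonneg (hw a)] at ha
  have hlow : Tendsto (fun x => ∑ a ∈ hfin.toFinset, v a * ‖c x a‖ ^ 2) l (𝓝 0) := by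
    simpa using tendsto_finsetSum hfin.toFinset fun a _ => ((hc a).norm.pow 2).const_mul (v a)
  filter_upwards [hlow.eventually_lt_const (half_pos hε)] with x hx
  calc energy v (c x)
      ≤ ∑ a ∈ hfin.toFinset, v a * ‖c x a‖ ^ 2 + δ * energy w (c x) :=
        energy_le_sum_add_mul_energy hδ.le hv hw _ (fun a ha => by simpa using ha) (hsum x)
    _ ≤ ∑ a ∈ hfin.toFinset, v a * ‖c x a‖ ^ 2 + R * δ := by rw [mul_comm R]; gcongr; exact hR x
    _ < ε := by linarith

theorem exists_subseq_tendsto_energy_sub [Countable ι] [ProperSpace E] (hw : ∀ a, 0 < w a)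
    {u : ℕ → ι → E} {R : ℝ} (hsum : ∀ n, Summable fun a => w a * ‖u n a‖ ^ 2)
    (hR : ∀ n, energy w (u n) ≤ R) :
    ∃ φ : ℕ → ℕ, StrictMono φ ∧ ∀ v : ι → ℝ, (∀ a, 0 ≤ v a) → v =o[cofinite] w →
      Tendsto (fun x : ℕ × ℕ => energy v (u (φ x.1) - u (φ x.2))) atTop (𝓝 0) := by
  have hw0 (a : ι) : 0 ≤ w a := (hw a).le
  have hball (n : ℕ) : u n ∈ Set.univ.pi fun a => Metric.closedBall (0 : E) √(R / w a) := by
    intro a _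
    rw [mem_closedBall_zero_iff]
    refine Real.le_sqrt_of_sq_le ((le_div_iff₀' (hw a)).2 ?_)
    exact ((hsum n).le_tsum a fun b _ => mul_nonneg (hw0 b) (by positivity)).trans (hR n)
  obtain ⟨y, -, φ, hφ, hy⟩ :=
    (isCompact_univ_pi fun a => isCompact_closedBall (0 : E) √(R / w a)).tendsto_subseq hball
  refine ⟨φ, hφ, fun v hv hvw => ?_⟩
  refine tendsto_energy_zero_of_isLittleO (R := 4 * R) hv hw0 hvw (fun a => ?_)
    (fun x => summable_energy_sub hw0 (hsum _) (hsum _)) fun x => ?_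
  · have ha := tendsto_pi_nhds.1 hy a
    rw [← prod_atTop_atTop_eq, ← sub_self (y a)]
    exact (ha.comp tendsto_fst).sub (ha.comp tendsto_snd)
  · linarith [energy_sub_le hw0 (hsum (φ x.1)) (hsum (φ x.2)), hR (φ x.1), hR (φ x.2)]

end Energy

lemma tendsto_atTop_of_summable_rpow_neg {ι : Type*} {w : ι → ℝ} {r : ℝ} (hw : ∀ a, 0 < w a)
    (hr : 0 < r) (hsum : Summable fun a => w a ^ (-r)) : Tendsto w cofinite atTop := by
  have hpos : Tendsto (fun a => w a ^ (-r)) cofinite (𝓝[>] 0) :=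
    tendsto_nhdsWithin_iff.2
      ⟨hsum.tendsto_cofinite_zero, .of_forall fun a => rpow_pos_of_pos (hw a) _⟩
  refine ((tendsto_rpow_neg_nhdsGT_zero (y := -r⁻¹) (by simpa)).comp hpos).congr fun a => ?_
  simp [← Real.rpow_mul (hw a).le, hr.ne']

lemma isLittleO_rpow_self {s : ℝ} (hs : s < 1) : (fun x : ℝ => x ^ s) =o[atTop] id := by
  refine (isLittleO_iff_tendsto' ?_).2 ((tendsto_rpow_neg_atTop (sub_pos.2 hs)).congr' ?_)
  · filter_upwards [eventually_gt_atTop 0] with x hx h0 using absurd h0 hx.ne'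
  · filter_upwards [eventually_gt_atTop 0] with x hx
    rw [neg_sub, Real.rpow_sub_one hx.ne', id]

section Lp

lemma sqrt_rpow {x : ℝ} (hx : 0 ≤ x) (t : ℝ) : √(x ^ t) = x ^ (t / 2) := by
  rw [Real.sqrt_eq_rpow, ← Real.rpow_mul hx, mul_one_div]

lemma mul_rpow_one_sub_mul_mul_rpow {x y z θ : ℝ} (hx : 0 ≤ x) (hy : 0 ≤ y) (hz : 0 ≤ z) :
    (x * z) ^ (1 - θ) * (y * z) ^ θ = x ^ (1 - θ) * y ^ θ * z := by
  rw [Real.mul_rpow hx hz, Real.mul_rpow hy hz, mul_mul_mul_comm, ← Real.rpow_add' hz (by simp),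
    sub_add_cancel, Real.rpow_one]

variable {Ω F : Type*} [MeasurableSpace Ω] {μ : Measure Ω} [NormedAddCommGroup F] {g : Ω → F}

lemma lpNorm_ofReal_eq_integral {p : ℝ} (hp : 0 < p) (hg : AEStronglyMeasurable g μ) :
    lpNorm g (.ofReal p) μ = (∫ z, ‖g z‖ ^ p ∂μ) ^ p⁻¹ := by
  rw [lpNorm_eq_integral_norm_rpow_toReal (by simpa using hp) ENNReal.ofReal_ne_top hg,
    ENNReal.toReal_ofReal hp.le]

lemma lpNorm_le_rpow_mul_lpNorm_rpow {B p q : ℝ} (hq : 0 < q) (hqp : q ≤ p) (hB : 0 ≤ B)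
    (hg : MemLp g (.ofReal q) μ) (hgB : ∀ᵐ z ∂μ, ‖g z‖ ≤ B) :
    lpNorm g (.ofReal p) μ ≤ B ^ (1 - q / p) * lpNorm g (.ofReal q) μ ^ (q / p) := by
  have hp : 0 < p := hq.trans_le hqp
  have hint : 0 ≤ ∫ z, ‖g z‖ ^ q ∂μ := integral_nonneg fun _ => by positivity
  have hle : ∫ z, ‖g z‖ ^ p ∂μ ≤ B ^ (p - q) * ∫ z, ‖g z‖ ^ q ∂μ := by
    rw [← integral_const_mul]
    refine integral_mono_of_nonneg (.of_forall fun _ => by positivity) (.const_mul ?_ _)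
      (hgB.mono fun z hz => ?_)
    · simpa [hq.le] using hg.integrable_norm_rpow (by simpa using hq) ENNReal.ofReal_ne_top
    · calc ‖g z‖ ^ p = ‖g z‖ ^ (p - q) * ‖g z‖ ^ q := by
            rw [← Real.rpow_add' (norm_nonneg _) (by linarith), sub_add_cancel]
        _ ≤ B ^ (p - q) * ‖g z‖ ^ q := by gcongr
  rw [lpNorm_ofReal_eq_integral hp hg.1, lpNorm_ofReal_eq_integral hq hg.1]
  calc (∫ z, ‖g z‖ ^ p ∂μ) ^ p⁻¹
      ≤ (B ^ (p - q) * ∫ z, ‖g z‖ ^ q ∂μ) ^ p⁻¹ :=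
        Real.rpow_le_rpow (integral_nonneg fun _ => by positivity) hle (by positivity)
    _ = _ := by
      rw [Real.mul_rpow (by positivity) hint, ← Real.rpow_mul hB, ← Real.rpow_mul hint]
      congr 2 <;> field_simp

lemma lpNorm_sum_le_of_lpNorm_fiber_le {ι : Type*} {G : Finset ι} {f : ι → Ω → F} {q : ENNReal}
    (hq : 1 ≤ q) (hf : ∀ a ∈ G, MemLp (f a) q μ) (level : ι → ℕ) {A ρ : ℝ} (hA : 0 ≤ A)
    (hρ0 : 0 ≤ ρ) (hρ1 : ρ < 1)
    (hlevel : ∀ m, lpNorm (fun z => ∑ a ∈ G with level a = m, f a z) q μ ≤ A * ρ ^ m) :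
    lpNorm (fun z => ∑ a ∈ G, f a z) q μ ≤ A * (1 - ρ)⁻¹ := by
  let shell (m : ℕ) (z : Ω) : F := ∑ a ∈ G with level a = m, f a z
  have hsplit : (fun z => ∑ a ∈ G, f a z) = ∑ m ∈ G.image level, shell m := by
    ext z
    rw [Finset.sum_apply]
    exact (Finset.sum_fiberwise_of_maps_to
      (fun a ha => Finset.mem_image_of_mem level ha) _).symm
  calc lpNorm (fun z => ∑ a ∈ G, f a z) q μ
      ≤ ∑ m ∈ G.image level, lpNorm (shell m) q μ := by
        rw [hsplit]
        exact lpNorm_sum_le (fun m _ => memLp_finsetSum _ fun a ha =>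
          hf a (Finset.mem_of_mem_filter a ha)) hq
    _ ≤ ∑ m ∈ G.image level, A * ρ ^ m := Finset.sum_le_sum fun m _ => hlevel m
    _ ≤ A * (1 - ρ)⁻¹ := by
      rw [← Finset.mul_sum, ← tsum_geometric_of_lt_one hρ0 hρ1]
      gcongr
      exact (summable_geometric_of_lt_one hρ0 hρ1).sum_le_tsum _ fun _ _ => by positivity

end Lp

/-- A system of functions on `(Ω, μ)` which are bounded by `1` and pairwise orthogonal in `L²(μ)`,
but not necessarily normalized. -/
structure IsBoundedOrthogonal {Ω ι 𝕜 : Type*} [MeasurableSpace Ω] [RCLike 𝕜] (e : ι → Ω → 𝕜)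
    (μ : Measure Ω) : Prop where
  aestronglyMeasurable : ∀ a, AEStronglyMeasurable (e a) μ
  norm_le_one : ∀ a z, ‖e a z‖ ≤ 1
  integral_mul_conj : Pairwise fun a b => ∫ z, e a z * starRingEnd 𝕜 (e b z) ∂μ = 0

namespace IsBoundedOrthogonal

variable {Ω ι 𝕜 : Type*} [MeasurableSpace Ω] [RCLike 𝕜] {e : ι → Ω → 𝕜} {μ : Measure Ω}

lemma comp_injective {κ : Type*} (he : IsBoundedOrthogonal e μ) {σ : κ → ι}
    (hσ : Function.Injective σ) : IsBoundedOrthogonal (fun a => e (σ a)) μ where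
  aestronglyMeasurable _ := he.aestronglyMeasurable _
  norm_le_one _ := he.norm_le_one _
  integral_mul_conj _ _ hab := he.integral_mul_conj (hσ.ne hab)

lemma norm_mul_le (he : IsBoundedOrthogonal e μ) (c : ι → 𝕜) (a : ι) (z : Ω) :
    ‖c a * e a z‖ ≤ ‖c a‖ := by
  rw [norm_mul]
  exact mul_le_of_le_one_right (norm_nonneg _) (he.norm_le_one a z)

lemma norm_sum_le (he : IsBoundedOrthogonal e μ) (F : Finset ι) (c : ι → 𝕜) (z : Ω) :
    ‖∑ a ∈ F, c a * e a z‖ ≤ ∑ a ∈ F, ‖c a‖ :=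
  norm_sum_le_of_le F fun a _ => he.norm_mul_le c a z

lemma aestronglyMeasurable_sum (he : IsBoundedOrthogonal e μ) (F : Finset ι) (c : ι → 𝕜) :
    AEStronglyMeasurable (fun z => ∑ a ∈ F, c a * e a z) μ :=
  F.aestronglyMeasurable_fun_sum fun a _ => (he.aestronglyMeasurable a).const_mul _

variable [IsFiniteMeasure μ]

lemma memLp_const_mul (he : IsBoundedOrthogonal e μ) (a : ι) (b : 𝕜) (p : ENNReal) :
    MemLp (fun z => b * e a z) p μ :=
  (MemLp.of_bound (he.aestronglyMeasurable a) 1 (.of_forall (he.norm_le_one a))).const_mul b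

lemma memLp_sum (he : IsBoundedOrthogonal e μ) (F : Finset ι) (c : ι → 𝕜) (p : ENNReal) :
    MemLp (fun z => ∑ a ∈ F, c a * e a z) p μ :=
  memLp_finsetSum F fun a _ => he.memLp_const_mul a (c a) p

lemma integrable_mul_conj (he : IsBoundedOrthogonal e μ) (a b : ι) :
    Integrable (fun z => e a z * starRingEnd 𝕜 (e b z)) μ := by
  refine .of_bound ((he.aestronglyMeasurable a).mul
    (RCLike.continuous_conj.comp_aestronglyMeasurable (he.aestronglyMeasurable b))) 1
    (.of_forall fun z => ?_)
  rw [norm_mul, RCLike.norm_conj]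
  exact mul_le_one₀ (he.norm_le_one a z) (norm_nonneg _) (he.norm_le_one b z)

lemma integral_norm_sq_sum (he : IsBoundedOrthogonal e μ) (F : Finset ι) (c : ι → 𝕜) :
    ∫ z, ‖∑ a ∈ F, c a * e a z‖ ^ 2 ∂μ = ∑ a ∈ F, ‖c a‖ ^ 2 * ∫ z, ‖e a z‖ ^ 2 ∂μ := by
  have hexpand (z : Ω) : ((‖∑ a ∈ F, c a * e a z‖ ^ 2 : ℝ) : 𝕜) =
      ∑ a ∈ F, ∑ b ∈ F,
        c a * starRingEnd 𝕜 (c b) * (e a z * starRingEnd 𝕜 (e b z)) := by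
    rw [RCLike.ofReal_pow, ← RCLike.mul_conj, map_sum, Finset.sum_mul_sum]
    refine Finset.sum_congr rfl fun a _ => Finset.sum_congr rfl fun b _ => ?_
    rw [map_mul]
    ring
  have hdiag (a : ι) : ∫ z, e a z * starRingEnd 𝕜 (e a z) ∂μ = (∫ z, ‖e a z‖ ^ 2 ∂μ : ℝ) := by
    simp only [RCLike.mul_conj, ← RCLike.ofReal_pow, integral_ofReal]
  have hint (a b : ι) := (he.integrable_mul_conj a b).const_mul (c a * starRingEnd 𝕜 (c b))
  rw [← RCLike.ofReal_inj (K := 𝕜), ← integral_ofReal, RCLike.ofReal_sum]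
  simp_rw [hexpand]
  rw [integral_finsetSum _ fun a _ => integrable_finsetSum _ fun b _ => hint a b]
  refine Finset.sum_congr rfl fun a ha => ?_
  rw [integral_finsetSum _ fun b _ => hint a b, Finset.sum_eq_single_of_mem a ha fun b _ hba => by
    rw [integral_const_mul, he.integral_mul_conj hba.symm, mul_zero]]
  rw [integral_const_mul, hdiag, RCLike.mul_conj, RCLike.ofReal_mul, RCLike.ofReal_pow]

lemma lpNorm_two_sum_le (he : IsBoundedOrthogonal e μ) (F : Finset ι) (c : ι → 𝕜) :
    lpNorm (fun z => ∑ a ∈ F, c a * e a z) (.ofReal 2) μ ≤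
      √(μ.real Set.univ) * √(∑ a ∈ F, ‖c a‖ ^ 2) := by
  have hnorm (a : ι) : ∫ z, ‖e a z‖ ^ 2 ∂μ ≤ μ.real Set.univ := by
    simpa using integral_mono_of_nonneg (μ := μ) (f := fun z => ‖e a z‖ ^ 2) (g := fun _ => 1)
      (.of_forall fun _ => by positivity) (integrable_const _)
      (.of_forall fun z => pow_le_one₀ (norm_nonneg _) (he.norm_le_one a z))
  rw [lpNorm_ofReal_eq_integral two_pos (he.aestronglyMeasurable_sum F c),
    ← Real.sqrt_mul measureReal_nonneg, Real.sqrt_eq_rpow, one_div]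
  simp only [Real.rpow_two]
  rw [he.integral_norm_sq_sum, Finset.mul_sum]
  refine Real.rpow_le_rpow (by positivity) (Finset.sum_le_sum fun a _ => ?_) (by positivity)
  rw [mul_comm (μ.real _)]
  gcongr
  exact hnorm a

end IsBoundedOrthogonal

section Weights

variable {ι E : Type*} [NormedAddCommGroup E] {w : ι → ℝ} {r s T : ℝ} {G : Finset ι}

lemma sq_sum_norm_le_sum_rpow_neg_mul (hw : ∀ a ∈ G, 0 < w a) (s : ℝ) (c : ι → E) :
    (∑ a ∈ G, ‖c a‖) ^ 2 ≤ (∑ a ∈ G, w a ^ (-s)) * ∑ a ∈ G, w a ^ s * ‖c a‖ ^ 2 := by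
  have hpow (t : ℝ) (a : ι) (ha : a ∈ G) : 0 ≤ w a ^ t := (rpow_pos_of_pos (hw a ha) t).le
  refine Finset.sum_sq_le_sum_mul_sum_of_sq_le_mul _ (hpow _)
    (fun a ha => mul_nonneg (hpow s a ha) (by positivity)) fun a ha => le_of_eq ?_
  rw [← mul_assoc, ← Real.rpow_add (hw a ha), neg_add_cancel, Real.rpow_zero, one_mul]

lemma sum_rpow_neg_le_rpow_sub_mul_tsum (hw : ∀ a, 0 < w a) (hsr : s ≤ r)
    (hsum : Summable fun a => w a ^ (-r)) (hT : 0 ≤ T) (hwT : ∀ a ∈ G, w a ≤ T) :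
    ∑ a ∈ G, w a ^ (-s) ≤ T ^ (r - s) * ∑' a, w a ^ (-r) :=
  have hpow (a : ι) : 0 ≤ w a ^ (-r) := (rpow_pos_of_pos (hw a) _).le
  calc ∑ a ∈ G, w a ^ (-s) ≤ ∑ a ∈ G, T ^ (r - s) * w a ^ (-r) := by
        refine Finset.sum_le_sum fun a ha => ?_
        rw [show -s = r - s + -r by ring, Real.rpow_add (hw a)]
        exact mul_le_mul_of_nonneg_right
          (Real.rpow_le_rpow (hw a).le (hwT a ha) (sub_nonneg.2 hsr)) (hpow a)
    _ ≤ _ := by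
      rw [← Finset.mul_sum]
      gcongr
      exact hsum.sum_le_tsum _ fun a _ => hpow a

lemma sum_norm_sq_le_rpow_neg_mul (hT : 0 < T) (hs : 0 ≤ s) (hTw : ∀ a ∈ G, T ≤ w a) (c : ι → E) :
    ∑ a ∈ G, ‖c a‖ ^ 2 ≤ T ^ (-s) * ∑ a ∈ G, w a ^ s * ‖c a‖ ^ 2 := by
  rw [Finset.mul_sum]
  refine Finset.sum_le_sum fun a ha => ?_
  rw [← mul_assoc, Real.rpow_neg hT.le]
  refine le_mul_of_one_le_left (by positivity) ((one_le_inv_mul₀ (by positivity)).2 ?_)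
  exact Real.rpow_le_rpow hT.le (hTw a ha) hs

end Weights

namespace IsBoundedOrthogonal

variable {Ω ι 𝕜 : Type*} [MeasurableSpace Ω] [RCLike 𝕜] {e : ι → Ω → 𝕜} {μ : Measure Ω}
  {w : ι → ℝ} {p r s : ℝ}

lemma norm_sum_le_of_weight_le (he : IsBoundedOrthogonal e μ) (hw : ∀ a, 0 < w a) (hsr : s ≤ r)
    (hsum : Summable fun a => w a ^ (-r)) {T : ℝ} (hT : 0 ≤ T) {G : Finset ι}
    (hwT : ∀ a ∈ G, w a ≤ T) (c : ι → 𝕜) (z : Ω) :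
    ‖∑ a ∈ G, c a * e a z‖ ≤
      T ^ ((r - s) / 2) * √(∑' a, w a ^ (-r)) * √(∑ a ∈ G, w a ^ s * ‖c a‖ ^ 2) := by
  have hE : 0 ≤ ∑ a ∈ G, w a ^ s * ‖c a‖ ^ 2 :=
    Finset.sum_nonneg fun a _ => mul_nonneg (rpow_pos_of_pos (hw a) s).le (by positivity)
  rw [← sqrt_rpow hT, ← Real.sqrt_mul (by positivity), ← Real.sqrt_mul' _ hE]
  refine (he.norm_sum_le G c z).trans (Real.le_sqrt_of_sq_le ?_)
  exact (sq_sum_norm_le_sum_rpow_neg_mul (fun a _ => hw a) s c).trans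
    (mul_le_mul_of_nonneg_right (sum_rpow_neg_le_rpow_sub_mul_tsum hw hsr hsum hT hwT) hE)

variable [IsFiniteMeasure μ]

lemma lpNorm_two_sum_le_of_le_weight (he : IsBoundedOrthogonal e μ) (hs : 0 ≤ s) {T : ℝ}
    (hT : 0 < T) {G : Finset ι} (hTw : ∀ a ∈ G, T ≤ w a) (c : ι → 𝕜) :
    lpNorm (fun z => ∑ a ∈ G, c a * e a z) (.ofReal 2) μ ≤
      √(μ.real Set.univ) * T ^ (-s / 2) * √(∑ a ∈ G, w a ^ s * ‖c a‖ ^ 2) := by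
  refine (he.lpNorm_two_sum_le G c).trans ?_
  rw [← sqrt_rpow hT.le, mul_assoc, ← Real.sqrt_mul (by positivity : 0 ≤ T ^ (-s))]
  gcongr
  exact sum_norm_sq_le_rpow_neg_mul hT hs hTw c

theorem exists_lpNorm_shell_le (he : IsBoundedOrthogonal e μ) (hw : ∀ a, 0 < w a) (hp : 2 ≤ p)
    (hs : 0 ≤ s) (hsr : s ≤ r) (hsum : Summable fun a => w a ^ (-r)) :
    ∃ K, 0 ≤ K ∧ ∀ (T : ℝ) (G : Finset ι) (c : ι → 𝕜), 0 < T →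
      (∀ a ∈ G, T ≤ w a) → (∀ a ∈ G, w a ≤ 2 * T) →
      lpNorm (fun z => ∑ a ∈ G, c a * e a z) (.ofReal p) μ ≤
        K * T ^ ((r * (1 - 2 / p) - s) / 2) * √(∑ a ∈ G, w a ^ s * ‖c a‖ ^ 2) := by
  set S := ∑' a, w a ^ (-r)
  set A := μ.real Set.univ
  refine ⟨(2 ^ ((r - s) / 2) * √S) ^ (1 - 2 / p) * √A ^ (2 / p), by positivity,
    fun T G c hT hTw hwT => ?_⟩
  set E := ∑ a ∈ G, w a ^ s * ‖c a‖ ^ 2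
  have hT' : (T ^ ((r - s) / 2)) ^ (1 - 2 / p) * (T ^ (-s / 2)) ^ (2 / p) =
      T ^ ((r * (1 - 2 / p) - s) / 2) := by
    rw [← Real.rpow_mul hT.le, ← Real.rpow_mul hT.le, ← Real.rpow_add hT]
    ring_nf
  calc lpNorm (fun z => ∑ a ∈ G, c a * e a z) (.ofReal p) μ
      ≤ ((2 * T) ^ ((r - s) / 2) * √S * √E) ^ (1 - 2 / p) *
          lpNorm (fun z => ∑ a ∈ G, c a * e a z) (.ofReal 2) μ ^ (2 / p) :=
        lpNorm_le_rpow_mul_lpNorm_rpow two_pos hp (by positivity) (he.memLp_sum G c _)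
          (.of_forall (he.norm_sum_le_of_weight_le hw hsr hsum (by positivity) hwT c))
    _ ≤ ((2 * T) ^ ((r - s) / 2) * √S * √E) ^ (1 - 2 / p) *
          (√A * T ^ (-s / 2) * √E) ^ (2 / p) :=
        mul_le_mul_of_nonneg_left (Real.rpow_le_rpow lpNorm_nonneg
          (he.lpNorm_two_sum_le_of_le_weight hs hT hTw c) (by positivity)) (by positivity)
    _ = (2 ^ ((r - s) / 2) * √S * T ^ ((r - s) / 2)) ^ (1 - 2 / p) *
          (√A * T ^ (-s / 2)) ^ (2 / p) * √E := by
        rw [Real.mul_rpow zero_le_two hT.le, mul_right_comm (2 ^ ((r - s) / 2)),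
          mul_rpow_one_sub_mul_mul_rpow (by positivity) (by positivity) (by positivity)]
    _ = _ := by
        rw [Real.mul_rpow (x := 2 ^ ((r - s) / 2) * √S) (by positivity) (by positivity),
          Real.mul_rpow (x := √A) (by positivity) (by positivity), mul_mul_mul_comm, hT']

theorem exists_lpNorm_sum_le (he : IsBoundedOrthogonal e μ) (hw : ∀ a, 1 ≤ w a) (hp : 2 ≤ p)
    (hsr : s ≤ r) (hrs : r * (1 - 2 / p) < s) (hsum : Summable fun a => w a ^ (-r)) :
    ∃ C, 0 ≤ C ∧ ∀ (F : Finset ι) (c : ι → 𝕜),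
      lpNorm (fun z => ∑ a ∈ F, c a * e a z) (.ofReal p) μ ≤
        C * √(∑ a ∈ F, w a ^ s * ‖c a‖ ^ 2) := by
  have hw0 (a : ι) : 0 < w a := one_pos.trans_le (hw a)
  have hs : 0 ≤ s := by
    have hp1 : 0 ≤ 1 - 2 / p := by rw [sub_nonneg, div_le_one (by linarith)]; exact hp
    have hsp : 0 < s * (2 / p) := by nlinarith
    exact (pos_of_mul_pos_left hsp (by positivity)).le
  obtain ⟨K, hK0, hK⟩ := he.exists_lpNorm_shell_le hw0 hp hs hsr hsum
  obtain ⟨ρ, hρ⟩ : ∃ ρ : ℝ, ρ = 2 ^ ((r * (1 - 2 / p) - s) / 2) := ⟨_, rfl⟩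
  have hρ0 : 0 ≤ ρ := by rw [hρ]; positivity
  have hρ1 : ρ < 1 := by
    rw [hρ]
    exact Real.rpow_lt_one_of_one_lt_of_neg one_lt_two (by linarith)
  refine ⟨K * (1 - ρ)⁻¹, mul_nonneg hK0 (inv_nonneg.2 (sub_nonneg.2 hρ1.le)), fun F c => ?_⟩
  choose level hlow hhigh using fun a => exists_nat_pow_near (hw a) one_lt_two
  rw [mul_right_comm]
  refine lpNorm_sum_le_of_lpNorm_fiber_le (by simpa using by linarith)
    (fun a _ => he.memLp_const_mul a (c a) _) level (by positivity) hρ0 hρ1 fun m => ?_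
  have hpow : ((2 : ℝ) ^ m) ^ ((r * (1 - 2 / p) - s) / 2) = ρ ^ m := by
    rw [hρ, Real.rpow_pow_comm zero_le_two]
  refine (hK (2 ^ m) _ c (by positivity) (fun a ha => ?_) fun a ha => ?_).trans ?_
  · rw [← (Finset.mem_filter.1 ha).2]
    exact hlow a
  · rw [← (Finset.mem_filter.1 ha).2, ← pow_succ']
    exact (hhigh a).le
  · rw [hpow, mul_right_comm]
    gcongr
    · exact fun a _ _ => mul_nonneg (rpow_pos_of_pos (hw0 a) s).le (by positivity)
    · exact Finset.filter_subset _ _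

theorem exists_integral_norm_tsum_rpow_le [Countable ι] (he : IsBoundedOrthogonal e μ)
    (hw : ∀ a, 1 ≤ w a) (hp : 2 ≤ p) (hsr : s ≤ r) (hrs : r * (1 - 2 / p) < s)
    (hsum : Summable fun a => w a ^ (-r)) :
    ∃ C, ∀ c : ι → 𝕜, Summable c → Summable (fun a => w a ^ s * ‖c a‖ ^ 2) →
      ∫ z, ‖∑' a, c a * e a z‖ ^ p ∂μ ≤ (C * √(energy (fun a => w a ^ s) c)) ^ p := by
  obtain ⟨C, hC0, hC⟩ := he.exists_lpNorm_sum_le hw hp hsr hrs hsum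
  have hp0 : 0 < p := by linarith
  have hws (a : ι) : 0 ≤ w a ^ s := (rpow_pos_of_pos (one_pos.trans_le (hw a)) s).le
  refine ⟨C, fun c hc hcs => ?_⟩
  have hlim : Tendsto (fun F : Finset ι => ∫ z, ‖∑ a ∈ F, c a * e a z‖ ^ p ∂μ) atTop
      (𝓝 (∫ z, ‖∑' a, c a * e a z‖ ^ p ∂μ)) := by
    refine tendsto_integral_filter_of_dominated_convergence (fun _ => (∑' a, ‖c a‖) ^ p)
      (.of_forall fun F => ?_) (.of_forall fun F => .of_forall fun z => ?_)
      (integrable_const _) (.of_forall fun z => ?_)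
    · exact ((he.aestronglyMeasurable_sum F c).norm.aemeasurable.pow_const p).aestronglyMeasurable
    · rw [Real.norm_of_nonneg (by positivity)]
      have := (he.norm_sum_le F c z).trans (hc.norm.sum_le_tsum F fun _ _ => norm_nonneg _)
      gcongr
    · have hz : Summable fun a => c a * e a z :=
        .of_norm_bounded hc.norm fun a => he.norm_mul_le c a z
      exact hz.hasSum.norm.rpow_const (.inr hp0.le)
  refine le_of_tendsto' hlim fun F => ?_
  have hint : 0 ≤ ∫ z, ‖∑ a ∈ F, c a * e a z‖ ^ p ∂μ := integral_nonneg fun _ => by positivity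
  rw [← Real.rpow_inv_le_iff_of_pos hint (by positivity) hp0,
    ← lpNorm_ofReal_eq_integral hp0 (he.aestronglyMeasurable_sum F c)]
  refine (hC F c).trans ?_
  gcongr
  exact hcs.sum_le_tsum _ fun a _ => mul_nonneg (hws a) (by positivity)

theorem tendsto_integral_norm_tsum_rpow [Countable ι] (he : IsBoundedOrthogonal e μ)
    (hw : ∀ a, 1 ≤ w a) (hp : 2 ≤ p) (hsr : s ≤ r) (hrs : r * (1 - 2 / p) < s)
    (hsum : Summable fun a => w a ^ (-r)) {α : Type*} {l : Filter α} {c : α → ι → 𝕜}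
    (hc : ∀ x, Summable (c x)) (hcs : ∀ x, Summable fun a => w a ^ s * ‖c x a‖ ^ 2)
    (hlim : Tendsto (fun x => energy (fun a => w a ^ s) (c x)) l (𝓝 0)) :
    Tendsto (fun x => ∫ z, ‖∑' a, c x a * e a z‖ ^ p ∂μ) l (𝓝 0) := by
  obtain ⟨C, hC⟩ := he.exists_integral_norm_tsum_rpow_le hw hp hsr hrs hsum
  have hbound := (hlim.sqrt.const_mul C).rpow_const (p := p) (.inr (by linarith))
  rw [Real.sqrt_zero, mul_zero, Real.zero_rpow (by linarith)] at hbound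
  exact squeeze_zero (fun x => integral_nonneg fun _ => by positivity)
    (fun x => hC _ (hc x) (hcs x)) hbound

end IsBoundedOrthogonal

/-- The frequencies `(j, k)` of `E^s`: those off the zero set `2j = ±k` of the symbol of the wave
operator. -/
def nonresonant : Set (ℤ × ℤ) := {a | ¬(2 * a.1 = a.2 ∨ 2 * a.1 = -a.2)}

/-- The modulus `|k² - 4j²|` of the symbol of the wave operator at the frequency `(j, k)`. -/
def symbol (a : ℤ × ℤ) : ℝ := ((|a.2 ^ 2 - 4 * a.1 ^ 2| : ℤ) : ℝ)

/-- The Fourier mode `e^{i(2jx + kt)}` of frequency `(j, k)`. -/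
noncomputable def mode (a : ℤ × ℤ) (z : ℝ × ℝ) : ℂ :=
  Complex.exp (Complex.I * (2 * a.1 * z.1 + a.2 * z.2))

/-- The period cell `Q = [0, π] × [0, 2π]` of the Fourier modes. -/
def cell : Set (ℝ × ℝ) := Set.Icc (0 : ℝ) π ×ˢ Set.Icc (0 : ℝ) (2 * π)

lemma symbol_eq_mul (a : ℤ × ℤ) :
    symbol a = |((a.2 - 2 * a.1 : ℤ) : ℝ)| * |((a.2 + 2 * a.1 : ℤ) : ℝ)| := by
  rw [symbol, ← abs_mul, Int.cast_abs, ← Int.cast_mul]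
  ring_nf

lemma one_le_symbol {a : ℤ × ℤ} (ha : a ∈ nonresonant) : 1 ≤ symbol a := by
  obtain ⟨h₁, h₂⟩ := not_or.1 ha
  rw [symbol_eq_mul]
  refine one_le_mul_of_one_le_of_one_le ?_ ?_ <;>
    exact_mod_cast Int.one_le_abs (by lia)

lemma summable_symbol_rpow_neg {r : ℝ} (hr : 1 < r) : Summable fun a => symbol a ^ (-r) := by
  have hchar : Summable fun x : ℤ × ℤ => |(x.1 : ℝ)| ^ (-r) * |(x.2 : ℝ)| ^ (-r) :=
    (Real.summable_abs_int_rpow hr).mul_of_nonneg (Real.summable_abs_int_rpow hr)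
      (fun _ => by positivity) (fun _ => by positivity)
  have hinj : Function.Injective fun a : ℤ × ℤ => (a.2 - 2 * a.1, a.2 + 2 * a.1) := by
    rintro ⟨j, k⟩ ⟨j', k'⟩ h
    simp only [Prod.mk.injEq] at h ⊢
    lia
  exact (hchar.comp_injective hinj).congr fun a => by
    rw [symbol_eq_mul, Real.mul_rpow (abs_nonneg _) (abs_nonneg _), Function.comp_apply]

lemma norm_mode (a : ℤ × ℤ) (z : ℝ × ℝ) : ‖mode a z‖ = 1 := by
  rw [mode, mul_comm]
  exact_mod_cast Complex.norm_exp_ofReal_mul_I (2 * a.1 * z.1 + a.2 * z.2)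

lemma continuous_mode (a : ℤ × ℤ) : Continuous (mode a) := by
  unfold mode
  fun_prop

lemma mode_mul_conj_mode (a b : ℤ × ℤ) (z : ℝ × ℝ) :
    mode a z * starRingEnd ℂ (mode b z) = mode (a - b) z := by
  simp only [mode, ← Complex.exp_conj, ← Complex.exp_add]
  congr 1
  simp only [map_mul, conj_I, map_add, conj_ofNat, map_intCast, conj_ofReal, neg_mul,
    Prod.fst_sub, Int.cast_sub, Prod.snd_sub]
  ring

lemma integral_exp_mul_eq_zero {c T : ℝ} (hT : 0 ≤ T) (hc : c ≠ 0) {n : ℤ}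
    (h : c * T = n * (2 * π)) : ∫ x in Set.Icc 0 T, Complex.exp (Complex.I * c * x) = 0 := by
  have hcT : Complex.exp (Complex.I * c * T) = 1 := by
    refine Complex.exp_eq_one_iff.2 ⟨n, ?_⟩
    have h' : (c : ℂ) * T = n * (2 * π) := by exact_mod_cast h
    linear_combination Complex.I * h'
  rw [integral_Icc_eq_integral_Ioc, ← intervalIntegral.integral_of_le hT,
    integral_exp_mul_complex (mul_ne_zero Complex.I_ne_zero (by exact_mod_cast hc)), hcT]
  simp

lemma integral_mode_eq_zero {a : ℤ × ℤ} (ha : a ≠ 0) : ∫ z in cell, mode a z = 0 := by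
  have hmode (z : ℝ × ℝ) : mode a z = Complex.exp (Complex.I * (2 * a.1 : ℝ) * z.1) *
      Complex.exp (Complex.I * (a.2 : ℝ) * z.2) := by
    rw [mode, ← Complex.exp_add]
    push_cast
    ring_nf
  simp_rw [hmode]
  rw [cell, Measure.volume_eq_prod,
    setIntegral_prod_mul (fun x : ℝ => Complex.exp (Complex.I * (2 * a.1 : ℝ) * x))
      fun t : ℝ => Complex.exp (Complex.I * (a.2 : ℝ) * t), mul_eq_zero]
  by_cases hj : a.1 = 0
  · have hk : a.2 ≠ 0 := fun hk => ha (Prod.ext hj hk)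
    exact .inr (integral_exp_mul_eq_zero two_pi_pos.le (by exact_mod_cast hk) (n := a.2) rfl)
  · exact .inl (integral_exp_mul_eq_zero pi_nonneg (by simpa using hj) (n := a.1) (by ring))

instance isFiniteMeasure_restrict_cell : IsFiniteMeasure (volume.restrict cell) :=
  isFiniteMeasure_restrict.2 (isCompact_Icc.prod isCompact_Icc).measure_lt_top.ne

lemma isBoundedOrthogonal_mode : IsBoundedOrthogonal mode (volume.restrict cell) where
  aestronglyMeasurable a := (continuous_mode a).aestronglyMeasurable
  norm_le_one a z := (norm_mode a z).le
  integral_mul_conj a b hab := by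
    simp only [mode_mul_conj_mode]
    exact integral_mode_eq_zero (sub_ne_zero.2 hab)

lemma summable_mul_mode_iff {ι : Type*} {σ : ι → ℤ × ℤ} {c : ι → ℂ} {z : ℝ × ℝ} :
    (Summable fun a => c a * mode (σ a) z) ↔ Summable c := by
  rw [← summable_norm_iff, ← summable_norm_iff (f := c)]
  simp only [norm_mul, norm_mode, mul_one]

theorem tendsto_integral_norm_sub_rpow {c : ℕ → nonresonant → ℂ} {f : ℕ → ℝ × ℝ → ℂ}
    (hf : ∀ n z, f n z = ∑' a : nonresonant, c n a * mode a z)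
    (hc : (∀ n, Summable (c n)) ∨ ∀ n, ¬Summable (c n))
    (hcw : ∀ n, Summable fun a : nonresonant => symbol a * ‖c n a‖ ^ 2)
    (hlim : ∀ s < (1 : ℝ), Tendsto (fun x : ℕ × ℕ =>
      energy (fun a : nonresonant => symbol a ^ s) (c x.1 - c x.2)) atTop (𝓝 0))
    {p : ℝ} (hp : 2 ≤ p) :
    Tendsto (fun x : ℕ × ℕ => ∫ z in cell, ‖f x.1 z - f x.2 z‖ ^ p) atTop (𝓝 0) := by
  rcases hc with hc | hc
  · have hw (a : nonresonant) : 1 ≤ symbol a := one_le_symbol a.2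
    have hsub (x : ℕ × ℕ) (z : ℝ × ℝ) :
        f x.1 z - f x.2 z = ∑' a : nonresonant, (c x.1 - c x.2) a * mode a z := by
      simp only [hf, Pi.sub_apply, sub_mul]
      exact ((summable_mul_mode_iff.2 (hc _)).tsum_sub (summable_mul_mode_iff.2 (hc _))).symm
    have hmode : IsBoundedOrthogonal (fun a : nonresonant => mode a) (volume.restrict cell) :=
      isBoundedOrthogonal_mode.comp_injective Subtype.coe_injective
    simp_rw [hsub]
    have hp0 : 0 < p⁻¹ := by positivity
    -- Any `s < 1 < r` with `r (1 - 2/p) < s` would do.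
    exact hmode.tendsto_integral_norm_tsum_rpow (s := 1 - p⁻¹) (r := 1 + p⁻¹) hw hp (by linarith)
      (by rw [div_eq_mul_inv]; nlinarith)
      ((summable_symbol_rpow_neg (by linarith)).subtype nonresonant)
      (c := fun x : ℕ × ℕ => c x.1 - c x.2) (fun x => (hc x.1).sub (hc x.2))
      (fun x => summable_rpow_mul_norm_sq hw (by linarith)
        (summable_energy_sub (fun a => zero_le_one.trans (hw a)) (hcw _) (hcw _)))
      (hlim _ (by linarith))
  · -- The series diverge at every point, so their `tsum`s take the junk value `0`.
    have hzero (n : ℕ) (z : ℝ × ℝ) : f n z = 0 := by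
      rw [hf, tsum_eq_zero_of_not_summable (mt summable_mul_mode_iff.1 (hc n))]
    simp [hzero, Real.zero_rpow (by linarith : p ≠ 0)]

theorem exists_subseq_tendsto_energy_integral_sub {c : ℕ → nonresonant → ℂ}
    {f : ℕ → ℝ × ℝ → ℂ} {R : ℝ} (hf : ∀ n z, f n z = ∑' a : nonresonant, c n a * mode a z)
    (hcw : ∀ n, Summable fun a : nonresonant => symbol a * ‖c n a‖ ^ 2)
    (hR : ∀ n, energy (fun a : nonresonant => symbol a) (c n) ≤ R) :
    ∃ φ : ℕ → ℕ, StrictMono φ ∧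
      (∀ s < (1 : ℝ), Tendsto (fun x : ℕ × ℕ => energy (fun a : nonresonant => symbol a ^ s)
        (c (φ x.1) - c (φ x.2))) atTop (𝓝 0)) ∧
      ∀ p ≥ (2 : ℝ), Tendsto (fun x : ℕ × ℕ =>
        ∫ z in cell, ‖f (φ x.1) z - f (φ x.2) z‖ ^ p) atTop (𝓝 0) := by
  obtain ⟨ψ, hψ⟩ := Nat.exists_subseq_of_forall_mem_union (s := {c | Summable c})
    (t := {c | ¬Summable c}) c fun n => em _
  have hw (a : nonresonant) : 0 < symbol a := one_pos.trans_le (one_le_symbol a.2)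
  have hatTop : Tendsto (fun a : nonresonant => symbol a) cofinite atTop :=
    tendsto_atTop_of_summable_rpow_neg hw two_pos
      ((summable_symbol_rpow_neg one_lt_two).subtype nonresonant)
  obtain ⟨θ, hθ, hlim⟩ := exists_subseq_tendsto_energy_sub (u := fun n => c (ψ n)) hw
    (fun n => hcw _) (fun n => hR _)
  have hE (s : ℝ) (hs : s < 1) := hlim (fun a => symbol a ^ s)
    (fun a => (rpow_pos_of_pos (hw a) s).le) ((isLittleO_rpow_self hs).comp_tendsto hatTop)
  exact ⟨ψ ∘ θ, ψ.strictMono.comp hθ, hE, fun p hp =>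
    tendsto_integral_norm_sub_rpow (c := fun n => c (ψ (θ n))) (f := fun n => f (ψ (θ n)))
      (fun n => hf _) (hψ.imp (fun h n => h (θ n)) fun h n => h (θ n)) (fun n => hcw _) hE hp⟩

lemma exists_forall_ge_le_of_tendsto {g : ℕ × ℕ → ℝ} (hg : Tendsto g atTop (𝓝 0)) :
    ∀ ε > 0, ∃ N : ℕ, ∀ a ≥ N, ∀ b ≥ N, g (a, b) ≤ ε := fun _ hε =>
  (eventually_atTop_prod_self.1 (hg.eventually_le_const hε)).imp fun _ hN a ha b hb => hN a b ha hb

end WaveEmbedding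

theorem stmt_10_general (R : ℝ) (u : ℕ → ℤ × ℤ → ℂ)
    (hsupp : ∀ n, ∀ j k : ℤ, (2 * j = k ∨ 2 * j = -k) → u n (j, k) = 0)
    (hbdd : ∀ n, Summable (fun jk : ℤ × ℤ =>
      ((|jk.2 ^ 2 - 4 * jk.1 ^ 2| : ℤ) : ℝ) * ‖u n jk‖ ^ 2) ∧
      ∑' jk : ℤ × ℤ, ((|jk.2 ^ 2 - 4 * jk.1 ^ 2| : ℤ) : ℝ) * ‖u n jk‖ ^ 2 ≤ R)
    (f : ℕ → ℝ × ℝ → ℂ)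
    (hf : ∀ n, ∀ x t : ℝ, f n (x, t) = ∑' jk : ℤ × ℤ,
      u n jk * Complex.exp (Complex.I * (2 * jk.1 * x + jk.2 * t))) :
    ∃ φ : ℕ → ℕ, StrictMono φ ∧
      (∀ s < (1 : ℝ), ∀ ε > 0, ∃ N : ℕ, ∀ a ≥ N, ∀ b ≥ N,
        ∑' jk : ℤ × ℤ, ((|jk.2 ^ 2 - 4 * jk.1 ^ 2| : ℤ) : ℝ) ^ s *
          ‖u (φ a) jk - u (φ b) jk‖ ^ 2 ≤ ε) ∧
      (∀ p ≥ (2 : ℝ), ∀ ε > 0, ∃ N : ℕ, ∀ a ≥ N, ∀ b ≥ N,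
        ∫ z in Set.Icc (0 : ℝ) Real.pi ×ˢ Set.Icc (0 : ℝ) (2 * Real.pi),
          ‖f (φ a) z - f (φ b) z‖ ^ p ≤ ε) := by
  open WaveEmbedding in
  have hzero (n : ℕ) {a : ℤ × ℤ} (ha : a ∉ nonresonant) : u n a = 0 :=
    hsupp n a.1 a.2 (not_not.1 ha)
  have henergy (v : ℤ × ℤ → ℝ) {d : ℤ × ℤ → ℂ} (hd : ∀ a ∉ nonresonant, d a = 0) :
      energy (fun a : nonresonant => v a) (fun a => d a) = ∑' a, v a * ‖d a‖ ^ 2 :=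
    tsum_subtype_eq_of_support_subset (f := fun a => v a * ‖d a‖ ^ 2)
      (Function.support_subset_iff'.2 fun a ha => by simp [hd a ha])
  have hseries (n : ℕ) (z : ℝ × ℝ) : f n z = ∑' a : nonresonant, u n a * mode a z :=
    (hf n z.1 z.2).trans (tsum_subtype_eq_of_support_subset (f := fun a => u n a * mode a z)
      (Function.support_subset_iff'.2 fun a ha => by simp [hzero n ha])).symm
  obtain ⟨φ, hφ, hE, hL⟩ := exists_subseq_tendsto_energy_integral_sub (c := fun n a => u n a)
    hseries (fun n => (hbdd n).1.subtype nonresonant)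
    fun n => (henergy symbol fun a => hzero n).trans_le (hbdd n).2
  refine ⟨φ, hφ, fun s hs ε hε => ?_, fun p hp => exists_forall_ge_le_of_tendsto (hL p hp)⟩
  obtain ⟨N, hN⟩ := exists_forall_ge_le_of_tendsto (hE s hs) ε hε
  refine ⟨N, fun a ha b hb => (henergy (fun i => symbol i ^ s)
    (d := u (φ a) - u (φ b)) fun i hi => ?_).ge.trans (hN a ha b hb)⟩
  rw [Pi.sub_apply, hzero _ hi, hzero _ hi, sub_zero]

/-- Compactness of the embedding E¹ ↪ E^s (0 < s < 1) and hence of E¹ ↪ L^p(Q)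
with p = (2−s)/(1−s): any sequence bounded in the E¹ norm has a subsequence which is
Cauchy in the E^s norm and whose associated functions are Cauchy in L^p(Q). -/
theorem stmt_10 (s p : ℝ) (hs0 : 0 < s) (hs1 : s < 1) (hp : p = (2 - s) / (1 - s))
    (u : ℕ → ℤ × ℤ → ℂ)
    (hsupp : ∀ n, ∀ j k : ℤ, (2 * j = k ∨ 2 * j = -k) → u n (j, k) = 0)
    (hbdd : ∀ n, Summable (fun jk : ℤ × ℤ =>
      ((|jk.2 ^ 2 - 4 * jk.1 ^ 2| : ℤ) : ℝ) * ‖u n jk‖ ^ 2) ∧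
      ∑' jk : ℤ × ℤ, ((|jk.2 ^ 2 - 4 * jk.1 ^ 2| : ℤ) : ℝ) * ‖u n jk‖ ^ 2 ≤ 1)
    (f : ℕ → ℝ × ℝ → ℂ)
    (hf : ∀ n, ∀ x t : ℝ, f n (x, t) = ∑' jk : ℤ × ℤ,
      u n jk * Complex.exp (Complex.I * (2 * jk.1 * x + jk.2 * t))) :
    ∃ φ : ℕ → ℕ, StrictMono φ ∧
      (∀ ε > 0, ∃ N : ℕ, ∀ a ≥ N, ∀ b ≥ N,
        ∑' jk : ℤ × ℤ, ((|jk.2 ^ 2 - 4 * jk.1 ^ 2| : ℤ) : ℝ) ^ s *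
          ‖u (φ a) jk - u (φ b) jk‖ ^ 2 ≤ ε) ∧
      (∀ ε > 0, ∃ N : ℕ, ∀ a ≥ N, ∀ b ≥ N,
        ∫ z in Set.Icc (0 : ℝ) Real.pi ×ˢ Set.Icc (0 : ℝ) (2 * Real.pi),
          ‖f (φ a) z - f (φ b) z‖ ^ p ≤ ε) := by
  obtain ⟨φ, hφ, hE, hL⟩ := stmt_10_general 1 u hsupp hbdd f hf
  exact ⟨φ, hφ, hE s hs1, hL p (by rw [hp, ge_iff_le, le_div_iff₀ (by linarith)]; linarith)⟩
end
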